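/- arXiv:2404.09746 — 3 statements merged into one kernel-verified Lean document; each statement's English description precedes it below -/
import Mathlib

section
/- Strong duality between the minimum gradient norm and the recession function (Euclidean case of Corollary 3.3): inf_{x ∈ ℝⁿ} ‖∇f(x)‖ = sup_{u : ‖u‖ ≤ 1} (−f^∞(u)), where terms with f^∞(u) = +∞ contribute −∞ to the supremum (the supremum is a finite nonnegative real, since u = 0 gives the value 0). -/
open Filter
open scoped RealInnerProductSpace

/-- The recession function (asymptotic slope) of `f`:
`f^∞(u) = sup_{s>0} (f(su) - f(0))/s`, valued in `EReal`. -/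
noncomputable def recessionFn {n : ℕ} (f : EuclideanSpace ℝ (Fin n) → ℝ)
    (u : EuclideanSpace ℝ (Fin n)) : EReal :=
  ⨆ (s : ℝ) (_ : 0 < s), (((f (s • u) - f 0) / s : ℝ) : EReal)

/-!
Weak duality: the affine minorant of `f` at `x` has slope `f'(x) u ≥ -‖f'(x)‖` along a direction
`u` of the unit ball, so `f^∞(u) ≥ -‖f'(x)‖`. For the converse let `m = inf ‖f'‖`. A minimizer `x`
of `f` over the ball of radius `t` satisfies `f(x) ≤ f(0) - t ‖f'(x)‖ ≤ f(0) - t m`, so the set of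
`u` in the unit ball with `f(t u) ≤ f(0) - t m` is nonempty. By convexity these sets shrink as `t`
grows, and a common point `u` has `f^∞(u) ≤ -m`. Weak compactness of balls provides both the
minimizers and the common point, so the argument works in every reflexive space.
-/

open Metric Set

section WeakTopology

variable {E : Type*} [AddCommGroup E] [Module ℝ E] [TopologicalSpace E]
  [IsTopologicalAddGroup E] [ContinuousSMul ℝ E] [LocallyConvexSpace ℝ E]

theorem isClosed_image_toWeakSpace_of_convex {K : Set E} (hconv : Convex ℝ K)
    (hclosed : IsClosed K) : IsClosed (toWeakSpace ℝ E '' K) := by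
  rw [← closure_eq_iff_isClosed, ← hconv.toWeakSpace_closure ℝ, hclosed.closure_eq]

theorem lowerSemicontinuous_comp_toWeakSpace_symm_of_quasiconvexOn {β : Type*} [LinearOrder β]
    {f : E → β} (hconv : QuasiconvexOn ℝ univ f) (hf : LowerSemicontinuous f) :
    LowerSemicontinuous (f ∘ (toWeakSpace ℝ E).symm) := by
  refine lowerSemicontinuous_iff_isClosed_preimage.2 fun c => ?_
  rw [preimage_comp, ← LinearEquiv.image_eq_preimage_symm]
  have hsublevel : Convex ℝ {x | f x ≤ c} := by simpa using hconv c
  exact isClosed_image_toWeakSpace_of_convex hsublevel (hf.isClosed_preimage c)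

end WeakTopology

theorem norm_gradient_eq_norm_fderiv {𝕜 E : Type*} [RCLike 𝕜] [NormedAddCommGroup E]
    [InnerProductSpace 𝕜 E] [CompleteSpace E] (f : E → 𝕜) (x : E) :
    ‖gradient f x‖ = ‖fderiv 𝕜 f x‖ :=
  LinearIsometryEquiv.norm_map _ _

theorem surjective_inclusionInDoubleDual_of_innerProductSpace (E : Type*) [NormedAddCommGroup E]
    [InnerProductSpace ℝ E] [CompleteSpace E] :
    Function.Surjective (NormedSpace.inclusionInDoubleDual ℝ E) := by
  intro φ
  let toDual := InnerProductSpace.toDual ℝ E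
  let φ' : StrongDual ℝ E := φ.comp toDual.toContinuousLinearEquiv.toContinuousLinearMap
  refine ⟨toDual.symm φ', ContinuousLinearMap.ext fun g => ?_⟩
  obtain ⟨y, rfl⟩ := toDual.surjective g
  calc toDual y (toDual.symm φ') = ⟪toDual.symm φ', y⟫ := by
        rw [InnerProductSpace.toDual_apply_apply, real_inner_comm]
    _ = φ (toDual y) := InnerProductSpace.toDual_symm_apply

section Reflexive

variable {E : Type*} [NormedAddCommGroup E] [NormedSpace ℝ E]

theorem isCompact_image_toWeakSpace_of_convex
    (hE : Function.Surjective (NormedSpace.inclusionInDoubleDual ℝ E)) {K : Set E}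
    (hconv : Convex ℝ K) (hclosed : IsClosed K) (hbdd : Bornology.IsBounded K) :
    IsCompact (toWeakSpace ℝ E '' K) := by
  have range_eq_univ : range (NormedSpace.inclusionInDoubleDualWeak ℝ E) = univ :=
    (StrongDual.toWeakDual.surjective.comp (hE.comp (toWeakSpace ℝ E).symm.surjective)).range_eq
  rw [← (isClosed_image_toWeakSpace_of_convex hconv hclosed).closure_eq]
  refine NormedSpace.isCompact_closure_of_isBounded ℝ E _ ?_ (range_eq_univ ▸ subset_univ _)
  rwa [preimage_image_eq K (toWeakSpace ℝ E).injective]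

theorem nonempty_iInter_of_directed_of_convex
    (hE : Function.Surjective (NormedSpace.inclusionInDoubleDual ℝ E)) {ι : Type*} [Nonempty ι]
    {K : ι → Set E} (hdir : Directed (· ⊇ ·) K) (hne : ∀ i, (K i).Nonempty)
    (hconv : ∀ i, Convex ℝ (K i)) (hclosed : ∀ i, IsClosed (K i))
    (hbdd : ∀ i, Bornology.IsBounded (K i)) : (⋂ i, K i).Nonempty := by
  have weak_inter : (⋂ i, toWeakSpace ℝ E '' K i).Nonempty :=
    IsCompact.nonempty_iInter_of_directed_nonempty_isCompact_isClosed _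
      (fun i j => (hdir i j).imp fun _ h => ⟨image_mono h.1, image_mono h.2⟩)
      (fun i => (hne i).image _)
      (fun i => isCompact_image_toWeakSpace_of_convex hE (hconv i) (hclosed i) (hbdd i))
      (fun i => isClosed_image_toWeakSpace_of_convex (hconv i) (hclosed i))
  rwa [← image_iInter (toWeakSpace ℝ E).bijective, image_nonempty] at weak_inter

theorem exists_isMinOn_of_quasiconvexOn
    (hE : Function.Surjective (NormedSpace.inclusionInDoubleDual ℝ E))
    {β : Type*} [LinearOrder β] {f : E → β} {K : Set E} (hf : QuasiconvexOn ℝ univ f)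
    (hlsc : LowerSemicontinuous f) (hne : K.Nonempty) (hconv : Convex ℝ K)
    (hclosed : IsClosed K) (hbdd : Bornology.IsBounded K) : ∃ x ∈ K, IsMinOn f K x := by
  obtain ⟨_, ⟨x, hx, rfl⟩, hmin⟩ :=
    LowerSemicontinuousOn.exists_isMinOn (hne.image (toWeakSpace ℝ E))
      (isCompact_image_toWeakSpace_of_convex hE hconv hclosed hbdd)
      ((lowerSemicontinuous_comp_toWeakSpace_symm_of_quasiconvexOn hf hlsc).lowerSemicontinuousOn _)
  exact ⟨x, hx, fun y hy => by simpa using hmin (mem_image_of_mem _ hy)⟩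

end Reflexive

section FirstOrder

variable {E : Type*} [NormedAddCommGroup E] [NormedSpace ℝ E] {f : E → ℝ} {f' : StrongDual ℝ E}
  {s : Set E} {x y : E}

theorem apply_sub_le_sub_of_convexOn_of_hasFDerivAt (hconv : ConvexOn ℝ s f)
    (hf : HasFDerivAt f f' x) (hx : x ∈ s) (hy : y ∈ s) : f' (y - x) ≤ f y - f x := by
  have hderiv : HasDerivAt (f ∘ AffineMap.lineMap x y) (f' (y - x)) (0 : ℝ) :=
    HasFDerivAt.comp_hasDerivAt 0 (by simpa using hf) AffineMap.hasDerivAt_lineMap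
  have hslope := (hconv.comp_affineMap (AffineMap.lineMap x y)).le_slope_of_hasDerivAt
    (by simpa using hx) (by simpa using hy) one_pos hderiv
  simpa [slope_def_field] using hslope

theorem apply_le_apply_of_isMinOn_of_hasFDerivAt (hs : Convex ℝ s) (hmin : IsMinOn f s x)
    (hf : HasFDerivAt f f' x) (hx : x ∈ s) (hy : y ∈ s) : f' x ≤ f' y := by
  have hdir : 0 ≤ f' (y - x) := hmin.localize.hasFDerivWithinAt_nonneg hf.hasFDerivWithinAt
    (sub_mem_posTangentConeAt_of_segment_subset (hs.segment_subset hx hy))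
  simpa using hdir

theorem mul_norm_le_neg_apply_of_isMinOn_closedBall {L : StrongDual ℝ E} {t : ℝ} (ht : 0 < t)
    (hmin : IsMinOn L (closedBall 0 t) x) : t * ‖L‖ ≤ -L x := by
  rw [← le_div_iff₀' ht]
  refine ContinuousLinearMap.opNorm_bound_of_ball_bound ht _ L fun z hz => abs_le.2 ?_
  have hneg : L x ≤ L (-z) := hmin (by simpa using hz)
  have hpos : L x ≤ L z := hmin hz
  rw [map_neg] at hneg
  constructor <;> linarith

theorem add_mul_norm_le_of_isMinOn_closedBall {t : ℝ} (ht : 0 < t)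
    (hconv : ConvexOn ℝ (closedBall 0 t) f) (hf : HasFDerivAt f f' x) (hx : x ∈ closedBall 0 t)
    (hmin : IsMinOn f (closedBall 0 t) x) : f x + t * ‖f'‖ ≤ f 0 := by
  have hnorm : t * ‖f'‖ ≤ -f' x := mul_norm_le_neg_apply_of_isMinOn_closedBall ht fun _ hy =>
    apply_le_apply_of_isMinOn_of_hasFDerivAt (convex_closedBall 0 t) hmin hf hx hy
  have htangent : f' (0 - x) ≤ f 0 - f x :=
    apply_sub_le_sub_of_convexOn_of_hasFDerivAt hconv hf hx (mem_closedBall_self ht.le)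
  rw [zero_sub, map_neg] at htangent
  linarith

end FirstOrder

section Recession

/-- The recession function `f^∞(u) = sup_{s>0} (f(su) - f(0))/s` of `f` on an arbitrary real vector
space; on `EuclideanSpace ℝ (Fin n)` it is definitionally `recessionFn`. -/
noncomputable def recessionFunction {E : Type*} [Zero E] [SMul ℝ E] (f : E → ℝ) (u : E) : EReal :=
  ⨆ (s : ℝ) (_ : 0 < s), (((f (s • u) - f 0) / s : ℝ) : EReal)

theorem recessionFunction_le_coe_iff {E : Type*} [Zero E] [SMul ℝ E] {f : E → ℝ} {u : E} {c : ℝ} :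
    recessionFunction f u ≤ c ↔ ∀ s : ℝ, 0 < s → f (s • u) ≤ f 0 + s * c := by
  refine iSup₂_le_iff.trans (forall₂_congr fun s hs => ?_)
  rw [EReal.coe_le_coe_iff, div_le_iff₀' hs, sub_le_iff_le_add']

theorem map_smul_le_add_mul_of_convexOn_of_le {E : Type*} [AddCommGroup E] [Module ℝ E] {f : E → ℝ}
    {u : E} {c s t : ℝ} (hconv : ConvexOn ℝ univ f) (hs : 0 < s) (hst : s ≤ t)
    (ht : f (t • u) ≤ f 0 + t * c) : f (s • u) ≤ f 0 + s * c := by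
  have ht0 : 0 < t := hs.trans_le hst
  have hratio : 0 ≤ s / t := by positivity
  have hratio' : 0 ≤ 1 - s / t := sub_nonneg.2 ((div_le_one ht0).2 hst)
  calc f (s • u) = f ((1 - s / t) • 0 + (s / t) • t • u) := by
        rw [smul_zero, zero_add, smul_smul, div_mul_cancel₀ s ht0.ne']
    _ ≤ (1 - s / t) * f 0 + s / t * f (t • u) :=
        hconv.2 (mem_univ _) (mem_univ _) hratio' hratio (sub_add_cancel _ _)
    _ ≤ (1 - s / t) * f 0 + s / t * (f 0 + t * c) := by gcongr
    _ = f 0 + s * c := by field_simp; ring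

variable {E : Type*} [NormedAddCommGroup E] [NormedSpace ℝ E] {f : E → ℝ}

theorem coe_apply_le_recessionFunction {f' : StrongDual ℝ E} {x : E} (hconv : ConvexOn ℝ univ f)
    (hf : HasFDerivAt f f' x) (u : E) : (f' u : EReal) ≤ recessionFunction f u := by
  refine EReal.le_of_forall_lt_iff_le.1 fun c hc => EReal.coe_le_coe_iff.2 ?_
  by_contra! hlt
  have hbound (s : ℝ) (hs : 0 < s) : s * (f' u - c) ≤ f 0 - f x + f' x := by
    have hrec := recessionFunction_le_coe_iff.1 hc.le s hs
    have htangent :=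
      apply_sub_le_sub_of_convexOn_of_hasFDerivAt hconv hf (mem_univ x) (mem_univ (s • u))
    rw [map_sub, map_smul, smul_eq_mul] at htangent
    linarith
  have hunbounded : Tendsto (fun s : ℝ => s * (f' u - c)) atTop atTop :=
    tendsto_id.atTop_mul_const (sub_pos.2 hlt)
  obtain ⟨s, hs, hgt⟩ := ((eventually_gt_atTop 0).and
    (hunbounded.eventually_gt_atTop (f 0 - f x + f' x))).exists
  exact (hbound s hs).not_gt hgt

theorem neg_recessionFunction_le_norm {f' : StrongDual ℝ E} {x u : E}
    (hconv : ConvexOn ℝ univ f) (hf : HasFDerivAt f f' x) (hu : ‖u‖ ≤ 1) :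
    -recessionFunction f u ≤ (‖f'‖ : ℝ) := by
  have hnorm : -‖f'‖ ≤ f' u := by
    simpa using neg_le_of_abs_le (f'.le_opNorm_of_le hu)
  rw [EReal.neg_le, ← EReal.coe_neg]
  exact (EReal.coe_le_coe hnorm).trans (coe_apply_le_recessionFunction hconv hf u)

theorem exists_norm_le_one_map_smul_le
    (hE : Function.Surjective (NormedSpace.inclusionInDoubleDual ℝ E))
    (hconv : ConvexOn ℝ univ f) (hf : Differentiable ℝ f) {m t : ℝ}
    (hm : ∀ x, m ≤ ‖fderiv ℝ f x‖) (ht : 0 < t) : ∃ u : E, ‖u‖ ≤ 1 ∧ f (t • u) ≤ f 0 + t * -m := by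
  obtain ⟨x, hx, hmin⟩ : ∃ x ∈ closedBall 0 t, IsMinOn f (closedBall 0 t) x :=
    exists_isMinOn_of_quasiconvexOn hE hconv.quasiconvexOn hf.continuous.lowerSemicontinuous
      (nonempty_closedBall.2 ht.le) (convex_closedBall 0 t) isClosed_closedBall isBounded_closedBall
  have hdescent : f x + t * ‖fderiv ℝ f x‖ ≤ f 0 :=
    add_mul_norm_le_of_isMinOn_closedBall ht (hconv.subset (subset_univ _) (convex_closedBall 0 t))
      (hf x).hasFDerivAt hx hmin
  have hm_mul : t * m ≤ t * ‖fderiv ℝ f x‖ := by gcongr; exact hm x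
  refine ⟨t⁻¹ • x, ?_, ?_⟩
  · rw [norm_smul, norm_inv, Real.norm_of_nonneg ht.le, inv_mul_le_one₀ ht]
    simpa using hx
  · rw [smul_inv_smul₀ ht.ne']
    linarith

theorem exists_norm_le_one_recessionFunction_le
    (hE : Function.Surjective (NormedSpace.inclusionInDoubleDual ℝ E))
    (hconv : ConvexOn ℝ univ f) (hf : Differentiable ℝ f) {m : ℝ}
    (hm : ∀ x, m ≤ ‖fderiv ℝ f x‖) : ∃ u : E, ‖u‖ ≤ 1 ∧ recessionFunction f u ≤ (-m : ℝ) := by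
  let K (t : Ioi (0 : ℝ)) : Set E := closedBall 0 1 ∩ {u | f (t.1 • u) ≤ f 0 + t * -m}
  have hanti : Antitone K := fun s t hst =>
    inter_subset_inter_right _ fun _ hu => map_smul_le_add_mul_of_convexOn_of_le hconv s.2 hst hu
  have hne (t) : (K t).Nonempty := by
    obtain ⟨u, hu, hfu⟩ := exists_norm_le_one_map_smul_le hE hconv hf hm t.2
    exact ⟨u, mem_closedBall_zero_iff.2 hu, hfu⟩
  have hKconv (t) : Convex ℝ (K t) := (convex_closedBall 0 1).inter <| by
    simpa using (hconv.comp_linearMap (LinearMap.lsmul ℝ E t.1)).convex_le (f 0 + t * -m)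
  have hclosed (t) : IsClosed (K t) := isClosed_closedBall.inter <|
    isClosed_le (hf.continuous.comp (continuous_const_smul t.1)) continuous_const
  obtain ⟨u, hu⟩ := nonempty_iInter_of_directed_of_convex hE hanti.directed_ge hne hKconv hclosed
    fun _ => isBounded_closedBall.subset inter_subset_left
  rw [mem_iInter] at hu
  exact ⟨u, mem_closedBall_zero_iff.1 (hu ⟨1, mem_Ioi.2 one_pos⟩).1,
    recessionFunction_le_coe_iff.2 fun s hs => (hu ⟨s, hs⟩).2⟩

end Recession

theorem strong_duality_gradient_recession_general {E : Type*} [NormedAddCommGroup E]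
    [NormedSpace ℝ E] (hE : Function.Surjective (NormedSpace.inclusionInDoubleDual ℝ E))
    {f : E → ℝ} (hconv : ConvexOn ℝ univ f) (hf : Differentiable ℝ f) :
    ((⨅ x, ‖fderiv ℝ f x‖ : ℝ) : EReal) =
      ⨆ (u : E) (_ : ‖u‖ ≤ 1), -recessionFunction f u := by
  apply le_antisymm
  · have hm (x : E) : ⨅ y, ‖fderiv ℝ f y‖ ≤ ‖fderiv ℝ f x‖ :=
      ciInf_le ⟨0, forall_mem_range.2 fun _ => norm_nonneg _⟩ x
    obtain ⟨u, hu, hrec⟩ := exists_norm_le_one_recessionFunction_le hE hconv hf hm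
    exact le_iSup₂_of_le u hu (EReal.le_neg.2 hrec)
  · refine iSup₂_le fun u hu => EReal.ge_of_forall_gt_iff_ge.1 fun c hc => ?_
    exact EReal.coe_le_coe (le_ciInf fun x => EReal.coe_le_coe_iff.1 <|
      hc.le.trans (neg_recessionFunction_le_norm hconv (hf x).hasFDerivAt hu))

/-- Strong duality between the minimum gradient norm and the recession function
(Euclidean case of Corollary 3.3):
`inf_x ‖∇f(x)‖ = sup_{‖u‖ ≤ 1} (-f^∞(u))` (as extended reals; terms with
`f^∞(u) = +∞` contribute `-∞` to the supremum). -/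
theorem strong_duality_gradient_recession {n : ℕ} (hn : 1 ≤ n)
    (f : EuclideanSpace ℝ (Fin n) → ℝ)
    (hconv : ConvexOn ℝ Set.univ f) (hf : ContDiff ℝ 1 f) :
    ((⨅ x, ‖gradient f x‖ : ℝ) : EReal) =
      ⨆ (u : EuclideanSpace ℝ (Fin n)) (_ : ‖u‖ ≤ 1), -(recessionFn f u) := by
  simp only [norm_gradient_eq_norm_fderiv]
  exact strong_duality_gradient_recession_general
    (surjective_inclusionInDoubleDual_of_innerProductSpace _) hconv (hf.differentiable one_ne_zero)
end

section
/- Vanishing change of consecutive gradients along gradient descent (Euclidean case of Proposition 3.9(2)): suppose κ* := inf_{y ∈ ℝⁿ} ‖∇f(y)‖ > 0 and let (x_i) be the gradient-descent sequence with step size 1/L from any initial point x₀. Then ‖∇f(x_i) − ∇f(x_{i+1})‖ converges to 0 as i → ∞. -/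
open Filter
open scoped RealInnerProductSpace
open scoped Gradient NNReal

/-!
For a convex function `f` with `K`-Lipschitz gradient, comparing the tangent lower bound at `y` with
the quadratic upper bound at `x` in the point `x - K⁻¹ • (∇ f x - ∇ f y)` shows that the gradient is
cocoercive: `‖∇ f x - ∇ f y‖ ^ 2 ≤ K * ⟪∇ f x - ∇ f y, x - y⟫`. Applied to a gradient step
`y = x - η • ∇ f x`, where `2 * ⟪∇ f x - ∇ f y, ∇ f x⟫` expands by polarization, this becomes
`(2 - η * K) * ‖∇ f x - ∇ f y‖ ^ 2 ≤ η * K * (‖∇ f x‖ ^ 2 - ‖∇ f y‖ ^ 2)`.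
Along the iteration the right-hand sides telescope, so the left-hand sides are summable.
-/

section NormedSpace

variable {E F : Type*} [NormedAddCommGroup E] [NormedSpace ℝ E]
  [NormedAddCommGroup F] [NormedSpace ℝ F] {s : Set E} {x y : E}

lemma hasFDerivWithinAt_apply_sub_le_of_convexOn {f : E → ℝ} {f' : E →L[ℝ] ℝ}
    (hconv : ConvexOn ℝ s f) (hx : x ∈ s) (hy : y ∈ s) (hf : HasFDerivWithinAt f f' s x) :
    f' (y - x) ≤ f y - f x := by
  let line : ℝ →ᵃ[ℝ] E := AffineMap.lineMap x y
  have hmaps : Set.MapsTo line (Set.Icc 0 1) s := hconv.1.mapsTo_lineMap hx hy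
  have hline : ConvexOn ℝ (Set.Icc 0 1) (f ∘ line) :=
    (hconv.comp_affineMap line).subset hmaps (convex_Icc 0 1)
  have hderiv : HasDerivWithinAt (f ∘ line) (f' (y - x)) (Set.Icc 0 1) 0 :=
    HasFDerivWithinAt.comp_hasDerivWithinAt (0 : ℝ) (by simpa [line] using hf)
      AffineMap.hasDerivWithinAt_lineMap hmaps
  have hslope := hline.le_slope_of_hasDerivWithinAt (Set.left_mem_Icc.2 zero_le_one)
    (Set.right_mem_Icc.2 zero_le_one) one_pos hderiv
  simpa [line, slope_def_field] using hslope

lemma norm_sub_sub_apply_sub_le_of_lipschitzOnWith {f : E → F} {f' : E → E →L[ℝ] F} {K : ℝ≥0}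
    (hs : Convex ℝ s) (hf : ∀ z ∈ s, HasFDerivWithinAt f (f' z) s z)
    (hlip : LipschitzOnWith K f' s) (hx : x ∈ s) (hy : y ∈ s) :
    ‖f y - f x - f' x (y - x)‖ ≤ K / 2 * ‖y - x‖ ^ 2 := by
  let line : ℝ →ᵃ[ℝ] E := AffineMap.lineMap x y
  have hmaps : Set.MapsTo line (Set.Icc 0 1) s := hs.mapsTo_lineMap hx hy
  let remainder : ℝ → F := fun t => f (line t) - f x - t • f' x (y - x)
  have hremainder : ∀ t ∈ Set.Icc (0 : ℝ) 1, HasDerivWithinAt remainder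
      ((f' (line t) - f' x) (y - x)) (Set.Icc 0 1) t := fun t ht => by
    have hcomp := (hf _ (hmaps ht)).comp_hasDerivWithinAt t
      AffineMap.hasDerivWithinAt_lineMap hmaps
    exact ((hcomp.sub_const (f x)).sub
      ((hasDerivWithinAt_id t _).smul_const (f' x (y - x)))).congr_deriv (by simp)
  have hbound : ∀ t : ℝ, HasDerivAt (fun t => K / 2 * ‖y - x‖ ^ 2 * t ^ 2)
      (K * t * ‖y - x‖ ^ 2) t := fun t =>
    ((hasDerivAt_pow 2 t).const_mul (K / 2 * ‖y - x‖ ^ 2)).congr_deriv (by ring)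
  have hderiv_le : ∀ t ∈ Set.Ico (0 : ℝ) 1,
      ‖(f' (line t) - f' x) (y - x)‖ ≤ K * t * ‖y - x‖ ^ 2 := fun t ht => by
    have hdist : ‖line t - x‖ = t * ‖y - x‖ := by
      simp [line, AffineMap.lineMap_apply, norm_smul, abs_of_nonneg ht.1]
    calc ‖(f' (line t) - f' x) (y - x)‖
        ≤ ‖f' (line t) - f' x‖ * ‖y - x‖ := ContinuousLinearMap.le_opNorm _ _
      _ ≤ K * ‖line t - x‖ * ‖y - x‖ := by
          gcongr
          exact hlip.norm_sub_le (hmaps (Set.Ico_subset_Icc_self ht)) hx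
      _ = K * t * ‖y - x‖ ^ 2 := by rw [hdist]; ring
  have hfence := image_norm_le_of_norm_deriv_right_le_deriv_boundary
    (fun t ht => (hremainder t ht).continuousWithinAt)
    (fun t ht => (hremainder t (Set.Ico_subset_Icc_self ht)).mono_of_mem_nhdsWithin
      (Icc_mem_nhdsGE_of_mem ht))
    (by simp [remainder, line]) hbound hderiv_le (Set.right_mem_Icc.2 zero_le_one)
  simpa [remainder, line] using hfence

end NormedSpace

section Hilbert

variable {H : Type*} [NormedAddCommGroup H] [InnerProductSpace ℝ H] [CompleteSpace H]
  {f : H → ℝ} {K : ℝ≥0}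

lemma add_inner_gradient_le_of_convexOn {s : Set H} {x y : H} (hconv : ConvexOn ℝ s f)
    (hx : x ∈ s) (hy : y ∈ s) (hdiff : DifferentiableAt ℝ f x) :
    f x + ⟪∇ f x, y - x⟫ ≤ f y := by
  rw [inner_gradient_left]
  linarith [hasFDerivWithinAt_apply_sub_le_of_convexOn hconv hx hy
    hdiff.hasFDerivAt.hasFDerivWithinAt]

lemma le_add_inner_gradient_add_of_lipschitzWith (hdiff : Differentiable ℝ f)
    (hlip : LipschitzWith K (∇ f)) (x y : H) :
    f y ≤ f x + ⟪∇ f x, y - x⟫ + K / 2 * ‖y - x‖ ^ 2 := by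
  have hlip' : LipschitzWith K (fderiv ℝ f) := by
    simpa only [toDual_comp_gradient, one_mul] using
      (InnerProductSpace.toDual ℝ H).lipschitz.comp hlip
  have hremainder := norm_sub_sub_apply_sub_le_of_lipschitzOnWith convex_univ
    (fun z _ => (hdiff z).hasFDerivAt.hasFDerivWithinAt) hlip'.lipschitzOnWith
    (Set.mem_univ x) (Set.mem_univ y)
  rw [inner_gradient_left]
  linarith [(Real.le_norm_self _).trans hremainder]

lemma norm_gradient_sub_sq_le_two_mul_of_convexOn (hconv : ConvexOn ℝ Set.univ f)
    (hdiff : Differentiable ℝ f) (hlip : LipschitzWith K (∇ f)) (x y : H) :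
    ‖∇ f x - ∇ f y‖ ^ 2 ≤ 2 * K * (f x - f y - ⟪∇ f y, x - y⟫) := by
  rcases eq_or_ne K 0 with rfl | hK
  · simpa using hlip.norm_sub_le x y
  set d := ∇ f x - ∇ f y
  have hlower := add_inner_gradient_le_of_convexOn hconv (Set.mem_univ y)
    (Set.mem_univ (x - (K : ℝ)⁻¹ • d)) (hdiff y)
  have hupper := le_add_inner_gradient_add_of_lipschitzWith hdiff hlip x (x - (K : ℝ)⁻¹ • d)
  rw [sub_right_comm, inner_sub_right, real_inner_smul_right] at hlower
  rw [sub_sub_cancel_left, inner_neg_right, real_inner_smul_right, norm_neg, norm_smul,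
    Real.norm_of_nonneg (by positivity)] at hupper
  have hinner : ⟪∇ f x, d⟫ - ⟪∇ f y, d⟫ = ‖d‖ ^ 2 := by
    rw [← inner_sub_left, real_inner_self_eq_norm_sq]
  have hgap : (2 * K : ℝ)⁻¹ * ‖d‖ ^ 2 ≤ f x - f y - ⟪∇ f y, x - y⟫ :=
    calc (2 * K : ℝ)⁻¹ * ‖d‖ ^ 2
        = (K : ℝ)⁻¹ * (⟪∇ f x, d⟫ - ⟪∇ f y, d⟫) - K / 2 * ((K : ℝ)⁻¹ * ‖d‖) ^ 2 := by
          rw [hinner]; field_simp; ring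
      _ ≤ f x - f y - ⟪∇ f y, x - y⟫ := by linarith
  rwa [inv_mul_le_iff₀ (by positivity)] at hgap

lemma norm_gradient_sub_sq_le_mul_inner_of_convexOn (hconv : ConvexOn ℝ Set.univ f)
    (hdiff : Differentiable ℝ f) (hlip : LipschitzWith K (∇ f)) (x y : H) :
    ‖∇ f x - ∇ f y‖ ^ 2 ≤ K * ⟪∇ f x - ∇ f y, x - y⟫ := by
  have hxy := norm_gradient_sub_sq_le_two_mul_of_convexOn hconv hdiff hlip x y
  have hyx := norm_gradient_sub_sq_le_two_mul_of_convexOn hconv hdiff hlip y x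
  rw [norm_sub_rev, ← neg_sub x y, inner_neg_right] at hyx
  rw [inner_sub_left]
  linarith

lemma norm_gradient_sub_gradient_step_sq_le (hconv : ConvexOn ℝ Set.univ f)
    (hdiff : Differentiable ℝ f) (hlip : LipschitzWith K (∇ f)) (η : ℝ) (x : H) :
    (2 - η * K) * ‖∇ f x - ∇ f (x - η • ∇ f x)‖ ^ 2 ≤
      η * K * (‖∇ f x‖ ^ 2 - ‖∇ f (x - η • ∇ f x)‖ ^ 2) := by
  have hcoercive :=
    norm_gradient_sub_sq_le_mul_inner_of_convexOn hconv hdiff hlip x (x - η • ∇ f x)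
  rw [sub_sub_cancel, real_inner_smul_right, inner_sub_left, real_inner_self_eq_norm_sq]
    at hcoercive
  have hpolar := norm_sub_sq_real (∇ f x) (∇ f (x - η • ∇ f x))
  rw [real_inner_comm] at hpolar
  linear_combination 2 * hcoercive - η * K * hpolar

end Hilbert

lemma summable_of_nonneg_of_le_sub_succ {a b : ℕ → ℝ} (ha : ∀ i, 0 ≤ a i)
    (hb : BddBelow (Set.range b)) (hab : ∀ i, a i ≤ b i - b (i + 1)) : Summable a := by
  obtain ⟨m, hm⟩ := hb
  refine summable_of_sum_range_le (c := b 0 - m) ha fun k => ?_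
  calc ∑ i ∈ Finset.range k, a i
      ≤ ∑ i ∈ Finset.range k, (b i - b (i + 1)) := Finset.sum_le_sum fun i _ => hab i
    _ = b 0 - b k := Finset.sum_range_sub' b k
    _ ≤ b 0 - m := sub_le_sub_left (hm (Set.mem_range_self k)) _

theorem gradient_descent_gradient_change_vanishes_general {H : Type*} [NormedAddCommGroup H]
    [InnerProductSpace ℝ H] [CompleteSpace H] {f : H → ℝ} {K : ℝ≥0} {η : ℝ} {x : ℕ → H}
    (hconv : ConvexOn ℝ Set.univ f) (hdiff : Differentiable ℝ f) (hlip : LipschitzWith K (∇ f))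
    (hη : 0 ≤ η) (hηK : η * K < 2) (hrec : ∀ i, x (i + 1) = x i - η • ∇ f (x i)) :
    Tendsto (fun i => ‖∇ f (x i) - ∇ f (x (i + 1))‖) atTop (nhds 0) := by
  have hgap : 0 < 2 - η * K := sub_pos.2 hηK
  have hstep : ∀ i, (2 - η * K) * ‖∇ f (x i) - ∇ f (x (i + 1))‖ ^ 2 ≤
      η * K * ‖∇ f (x i)‖ ^ 2 - η * K * ‖∇ f (x (i + 1))‖ ^ 2 := fun i => by
    rw [← mul_sub, hrec]
    exact norm_gradient_sub_gradient_step_sq_le hconv hdiff hlip η (x i)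
  have hsummable : Summable fun i => (2 - η * K) * ‖∇ f (x i) - ∇ f (x (i + 1))‖ ^ 2 :=
    summable_of_nonneg_of_le_sub_succ (b := fun i => η * K * ‖∇ f (x i)‖ ^ 2)
      (fun i => by positivity) ⟨0, by rintro _ ⟨i, rfl⟩; positivity⟩ hstep
  have hsq : Tendsto (fun i => ‖∇ f (x i) - ∇ f (x (i + 1))‖ ^ 2) atTop (nhds 0) :=
    ((summable_mul_left_iff hgap.ne').1 hsummable).tendsto_atTop_zero
  simpa [Real.sqrt_sq] using hsq.sqrt

/-- Vanishing change of consecutive gradients along gradient descent (Euclidean case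
of Proposition 3.9(2)): if `κ* := inf_y ‖∇f(y)‖ > 0` and `(x_i)` is the
gradient-descent sequence with step size `1/L`, then
`‖∇f(x_i) - ∇f(x_{i+1})‖ → 0`. -/
theorem gradient_descent_gradient_change_vanishes {n : ℕ} (hn : 1 ≤ n)
    (f : EuclideanSpace ℝ (Fin n) → ℝ) (L : ℝ) (hL : 0 < L)
    (hconv : ConvexOn ℝ Set.univ f) (hdiff : Differentiable ℝ f)
    (hsmooth : ∀ y z : EuclideanSpace ℝ (Fin n),
      ‖gradient f y - gradient f z‖ ≤ L * ‖y - z‖)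
    (hκ : 0 < ⨅ y, ‖gradient f y‖)
    (x : ℕ → EuclideanSpace ℝ (Fin n))
    (hrec : ∀ i : ℕ, x (i + 1) = x i - (1 / L) • gradient f (x i)) :
    Tendsto (fun i => ‖gradient f (x i) - gradient f (x (i + 1))‖) atTop
      (nhds 0) := by
  lift L to ℝ≥0 using hL.le
  exact gradient_descent_gradient_change_vanishes_general hconv hdiff
    (.of_dist_le_mul fun y z => by simpa only [dist_eq_norm] using hsmooth y z)
    (one_div_pos.2 hL).le (by rw [one_div_mul_cancel hL.ne']; exact one_lt_two) hrec
end

section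
/- Velocity of escape of gradient descent (Euclidean case of Proposition 3.9(3)): suppose κ* := inf_{y ∈ ℝⁿ} ‖∇f(y)‖ > 0 and let (x_i) be the gradient-descent sequence with step size 1/L from any initial point x₀. Then ‖x_i − x₀‖ / i converges to κ*/L as i → ∞. -/
open Filter
open scoped RealInnerProductSpace

/-!
A gradient step of size `η ≤ 2 / L` on a convex `L`-smooth function is a nonexpansive map `T` with
`‖T y - y‖ = η ‖∇f y‖`, so it suffices that `‖Tⁿ x - x‖ / n → κ := inf ‖T y - y‖` for every
nonexpansive `T` on a Banach space. For the upper bound, `Tⁿ x` stays within `‖x - y‖` of `Tⁿ y`,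
which moves by at most `‖T y - y‖` per step. For the lower bound, let `z` solve
`z - T z = r (x - z)` with `r > 0` small. Then `r ‖x - z‖ ≥ κ`, so `z` is very far from `x`, and up
to an error of order `r` each iteration brings the orbit of `x` closer to `z` by `κ`. Hence
`‖Tⁿ x - x‖ ≥ n κ - O(r)` for each fixed `n`, and `r → 0` gives `‖Tⁿ x - x‖ ≥ n κ`.
-/

section Nonexpansive

lemma dist_iterate_self_le_of_lipschitzWith_one {X : Type*} [PseudoMetricSpace X] {T : X → X}
    (hT : LipschitzWith 1 T) (x : X) (n : ℕ) : dist (T^[n] x) x ≤ n * dist (T x) x := by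
  calc dist (T^[n] x) x ≤ ∑ k ∈ Finset.range n, dist (T^[k] x) (T^[k + 1] x) := by
        simpa [dist_comm x] using dist_le_range_sum_dist (fun k => T^[k] x) n
    _ ≤ ∑ _k ∈ Finset.range n, dist (T x) x :=
        Finset.sum_le_sum fun k _ => by
          simpa [dist_comm x] using hT.dist_iterate_succ_le_geometric x k
    _ = n * dist (T x) x := by simp

lemma dist_iterate_self_le_add_of_lipschitzWith_one {X : Type*} [PseudoMetricSpace X] {T : X → X}
    (hT : LipschitzWith 1 T) (x y : X) (n : ℕ) :
    dist (T^[n] x) x ≤ n * dist (T y) y + 2 * dist x y := by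
  have horbits : dist (T^[n] x) (T^[n] y) ≤ dist x y := by
    simpa using (hT.iterate n).dist_le_mul x y
  have hy := dist_iterate_self_le_of_lipschitzWith_one hT y n
  have htriangle := dist_triangle4 (T^[n] x) (T^[n] y) y x
  rw [dist_comm y x] at htriangle
  linarith

variable {E : Type*} [NormedAddCommGroup E] [NormedSpace ℝ E] {T : E → E}

lemma exists_sub_apply_eq_smul_sub [CompleteSpace E] (hT : LipschitzWith 1 T) (x : E) {r : ℝ}
    (hr : 0 < r) : ∃ z, z - T z = r • (x - z) := by
  have hcontr : ContractingWith (1 + r)⁻¹.toNNReal fun y => (1 + r)⁻¹ • (T y + r • x) := by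
    refine ⟨Real.toNNReal_lt_one.2 (inv_lt_one_of_one_lt₀ (by linarith)),
      LipschitzWith.of_dist_le_mul fun y y' => ?_⟩
    rw [dist_smul₀, dist_add_right, Real.norm_of_nonneg (by positivity),
      Real.coe_toNNReal _ (by positivity)]
    gcongr
    simpa using hT.dist_le_mul y y'
  refine ⟨hcontr.fixedPoint, ?_⟩
  have hfixed := hcontr.fixedPoint_isFixedPt.eq
  rw [inv_smul_eq_iff₀ (by positivity)] at hfixed
  linear_combination (norm := module) -hfixed

lemma norm_iterate_sub_add_le_of_sub_apply_eq_smul_sub (hT : LipschitzWith 1 T) {x z : E} {r : ℝ}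
    (hr : 0 ≤ r) (hz : z - T z = r • (x - z)) (n : ℕ) :
    ‖T^[n] x - z‖ + n * ‖T z - z‖ ≤
      ‖x - z‖ + 2 * r * ∑ k ∈ Finset.range n, ‖T^[k + 1] x - x‖ := by
  have hdisplacement : ‖T z - z‖ = r * ‖x - z‖ := by
    rw [norm_sub_rev, hz, norm_smul, Real.norm_of_nonneg hr]
  induction n with
  | zero => simp
  | succ n ih =>
    set y := T^[n + 1] x with hy
    have hnonexp : ‖y - T z‖ ≤ ‖T^[n] x - z‖ := by
      rw [hy, Function.iterate_succ_apply']
      simpa using hT.norm_sub_le (T^[n] x) z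
    have hcontract : (1 + r) * ‖y - z‖ ≤ ‖y - T z‖ + r * ‖y - x‖ := by
      calc (1 + r) * ‖y - z‖ = ‖(1 + r) • (y - z)‖ := by
            rw [norm_smul, Real.norm_of_nonneg (by positivity)]
        _ = ‖(y - T z) + r • (y - x)‖ := by
            congr 1
            linear_combination (norm := module) -hz
        _ ≤ ‖y - T z‖ + r * ‖y - x‖ := by
            simpa [norm_smul, abs_of_nonneg hr] using norm_add_le (y - T z) (r • (y - x))
    have hfar : r * ‖x - z‖ ≤ r * (‖y - x‖ + ‖y - z‖) := by
      gcongr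
      simpa [norm_sub_rev x y] using norm_sub_le_norm_sub_add_norm_sub x y z
    rw [Finset.sum_range_succ]
    push_cast
    linarith

lemma mul_le_norm_iterate_sub_self [CompleteSpace E] (hT : LipschitzWith 1 T) {κ : ℝ}
    (hκ : ∀ y, κ ≤ ‖T y - y‖) (x : E) (n : ℕ) : n * κ ≤ ‖T^[n] x - x‖ := by
  set S := ∑ k ∈ Finset.range n, ‖T^[k + 1] x - x‖
  have hbound : ∀ r : ℝ, 0 < r → n * κ ≤ ‖T^[n] x - x‖ + 2 * r * S := by
    intro r hr
    obtain ⟨z, hz⟩ := exists_sub_apply_eq_smul_sub hT x hr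
    have hdrift := norm_iterate_sub_add_le_of_sub_apply_eq_smul_sub hT hr.le hz n
    have hκz : n * κ ≤ n * ‖T z - z‖ := by gcongr; exact hκ z
    have htriangle : ‖x - z‖ ≤ ‖T^[n] x - x‖ + ‖T^[n] x - z‖ := by
      simpa [norm_sub_rev x (T^[n] x)] using norm_sub_le_norm_sub_add_norm_sub x (T^[n] x) z
    linarith
  have hlim : Tendsto (fun r : ℝ => ‖T^[n] x - x‖ + 2 * r * S) (nhdsWithin 0 (Set.Ioi 0))
      (nhds ‖T^[n] x - x‖) :=
    tendsto_nhdsWithin_of_tendsto_nhds (Continuous.tendsto' (by fun_prop) _ _ (by simp))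
  exact ge_of_tendsto hlim (eventually_mem_nhdsWithin.mono hbound)

theorem tendsto_norm_iterate_sub_self_div [CompleteSpace E] (hT : LipschitzWith 1 T) (x : E) :
    Tendsto (fun n : ℕ => ‖T^[n] x - x‖ / n) atTop (nhds (⨅ y, ‖T y - y‖)) := by
  have hinf : ∀ y, ⨅ y, ‖T y - y‖ ≤ ‖T y - y‖ :=
    ciInf_le ⟨0, by rintro _ ⟨y, rfl⟩; exact norm_nonneg _⟩
  refine tendsto_order.2 ⟨fun a ha => ?_, fun b hb => ?_⟩
  · filter_upwards [eventually_gt_atTop 0] with n hn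
    refine ha.trans_le ?_
    rw [le_div_iff₀' (by exact_mod_cast hn)]
    exact mul_le_norm_iterate_sub_self hT hinf x n
  · obtain ⟨y, hy⟩ := exists_lt_of_ciInf_lt hb
    have hlim : Tendsto (fun n : ℕ => ‖T y - y‖ + 2 * ‖x - y‖ / n) atTop (nhds ‖T y - y‖) := by
      simpa using (tendsto_const_div_atTop_nhds_zero_nat (2 * ‖x - y‖)).const_add ‖T y - y‖
    filter_upwards [hlim.eventually_lt_const hy, eventually_gt_atTop 0] with n hlt hn
    refine lt_of_le_of_lt ?_ hlt
    have hupper := dist_iterate_self_le_add_of_lipschitzWith_one hT x y n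
    simp only [dist_eq_norm] at hupper
    have hn' : (n : ℝ) ≠ 0 := by exact_mod_cast hn.ne'
    calc ‖T^[n] x - x‖ / n ≤ (n * ‖T y - y‖ + 2 * ‖x - y‖) / n := by gcongr
      _ = ‖T y - y‖ + 2 * ‖x - y‖ / n := by rw [add_div, mul_div_cancel_left₀ _ hn']

end Nonexpansive

section Gradient

variable {E : Type*} [NormedAddCommGroup E] [InnerProductSpace ℝ E] [CompleteSpace E]
  {f : E → ℝ}

lemma hasDerivAt_comp_lineMap_of_hasGradientAt {g x y : E} {t : ℝ}
    (hf : HasGradientAt f g (AffineMap.lineMap x y t)) :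
    HasDerivAt (fun s : ℝ => f (AffineMap.lineMap x y s)) ⟪g, y - x⟫ t :=
  hf.hasFDerivAt.comp_hasDerivAt t AffineMap.hasDerivAt_lineMap

lemma inner_le_sub_of_convexOn_of_hasGradientAt {s : Set E} (hf : ConvexOn ℝ s f) {g x y : E}
    (hx : x ∈ s) (hy : y ∈ s) (hg : HasGradientAt f g x) : ⟪g, y - x⟫ ≤ f y - f x := by
  have hderiv : HasDerivAt (f ∘ AffineMap.lineMap x y) ⟪g, y - x⟫ (0 : ℝ) :=
    hasDerivAt_comp_lineMap_of_hasGradientAt (by simpa using hg)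
  simpa [slope_def_field] using (hf.comp_affineMap (AffineMap.lineMap x y)).le_slope_of_hasDerivAt
    (by simpa using hx) (by simpa using hy) zero_lt_one hderiv

variable {K : NNReal}

lemma sub_le_inner_gradient_add_sq (hf : Differentiable ℝ f) (hK : LipschitzWith K (gradient f))
    (x y : E) : f y - f x ≤ ⟪gradient f x, y - x⟫ + K / 2 * ‖y - x‖ ^ 2 := by
  set γ : ℝ → E := fun t => AffineMap.lineMap x y t
  have hfγ : ∀ t, HasDerivAt (fun t => f (γ t)) ⟪gradient f (γ t), y - x⟫ t := fun t =>
    hasDerivAt_comp_lineMap_of_hasGradientAt (hf _).hasGradientAt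
  have hmodel : ∀ t : ℝ, HasDerivAt
      (fun t => f x + ⟪gradient f x, y - x⟫ * t + K / 2 * ‖y - x‖ ^ 2 * t ^ 2)
      (⟪gradient f x, y - x⟫ + K * t * ‖y - x‖ ^ 2) t := fun t => by
    refine HasDerivAt.congr_deriv ((((hasDerivAt_id t).const_mul _).const_add (f x)).add
      ((hasDerivAt_pow 2 t).const_mul (K / 2 * ‖y - x‖ ^ 2))) ?_
    norm_num
    ring
  have hslope : ∀ t ∈ Set.Ico (0 : ℝ) 1,
      ⟪gradient f (γ t), y - x⟫ ≤ ⟪gradient f x, y - x⟫ + K * t * ‖y - x‖ ^ 2 := by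
    intro t ht
    rw [← sub_le_iff_le_add', ← inner_sub_left]
    calc ⟪gradient f (γ t) - gradient f x, y - x⟫
        ≤ ‖gradient f (γ t) - gradient f x‖ * ‖y - x‖ := real_inner_le_norm _ _
      _ ≤ K * ‖γ t - x‖ * ‖y - x‖ := by gcongr; exact hK.norm_sub_le _ _
      _ = K * t * ‖y - x‖ ^ 2 := by
        rw [← dist_eq_norm (γ t), dist_lineMap_left, Real.norm_of_nonneg ht.1, dist_comm,
          dist_eq_norm]
        ring
  have hle := image_le_of_deriv_right_le_deriv_boundary
    (fun t _ => (hfγ t).continuousAt.continuousWithinAt)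
    (fun t _ => (hfγ t).hasDerivWithinAt) (by simp [γ])
    (fun t _ => (hmodel t).continuousAt.continuousWithinAt)
    (fun t _ => (hmodel t).hasDerivWithinAt) hslope (Set.right_mem_Icc.2 zero_le_one)
  simp only [γ, AffineMap.lineMap_apply_one] at hle
  linarith

lemma inner_gradient_add_mul_sq_le_sub (hconv : ConvexOn ℝ Set.univ f)
    (hf : Differentiable ℝ f) (hK : LipschitzWith K (gradient f)) (x y : E) (t : ℝ) :
    ⟪gradient f x, y - x⟫ + (t - K / 2 * t ^ 2) * ‖gradient f y - gradient f x‖ ^ 2 ≤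
      f y - f x := by
  set w := gradient f y - gradient f x with hw
  have hbelow := inner_le_sub_of_convexOn_of_hasGradientAt hconv (Set.mem_univ x)
    (Set.mem_univ (y - t • w)) (hf x).hasGradientAt
  have habove := sub_le_inner_gradient_add_sq hf hK y (y - t • w)
  have hsq : ⟪gradient f y, w⟫ - ⟪gradient f x, w⟫ = ‖w‖ ^ 2 := by
    rw [← inner_sub_left, ← hw, real_inner_self_eq_norm_sq]
  rw [sub_right_comm, inner_sub_right, real_inner_smul_right] at hbelow
  rw [sub_sub_cancel_left, inner_neg_right, real_inner_smul_right, norm_neg, norm_smul, mul_pow,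
    Real.norm_eq_abs, sq_abs] at habove
  linear_combination hbelow + habove - t * hsq

/-- For `t = 1 / K` this is the Baillon–Haddad inequality; leaving `t` free covers `K = 0`. -/
lemma mul_norm_gradient_sub_sq_le_inner (hconv : ConvexOn ℝ Set.univ f)
    (hf : Differentiable ℝ f) (hK : LipschitzWith K (gradient f)) (x y : E) (t : ℝ) :
    (2 * t - K * t ^ 2) * ‖gradient f x - gradient f y‖ ^ 2 ≤
      ⟪gradient f x - gradient f y, x - y⟫ := by
  have hxy := inner_gradient_add_mul_sq_le_sub hconv hf hK x y t
  have hyx := inner_gradient_add_mul_sq_le_sub hconv hf hK y x t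
  rw [norm_sub_rev, ← neg_sub x y, inner_neg_right] at hxy
  rw [inner_sub_left]
  linarith

lemma lipschitzWith_one_sub_smul_gradient (hconv : ConvexOn ℝ Set.univ f)
    (hf : Differentiable ℝ f) (hK : LipschitzWith K (gradient f)) {η : ℝ} (hη : 0 ≤ η)
    (hηK : η * K ≤ 2) : LipschitzWith 1 fun x => x - η • gradient f x := by
  refine LipschitzWith.of_dist_le_mul fun x y => ?_
  set w := gradient f x - gradient f y with hw
  have hcoercive : η * ‖w‖ ^ 2 ≤ 2 * ⟪x - y, w⟫ := by
    have hcoeff : η ≤ 2 * (2 * (η / 2) - K * (η / 2) ^ 2) := by nlinarith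
    calc η * ‖w‖ ^ 2 ≤ 2 * (2 * (η / 2) - K * (η / 2) ^ 2) * ‖w‖ ^ 2 := by gcongr
      _ = 2 * ((2 * (η / 2) - K * (η / 2) ^ 2) * ‖w‖ ^ 2) := by ring
      _ ≤ 2 * ⟪x - y, w⟫ := by
        rw [real_inner_comm]
        gcongr
        exact mul_norm_gradient_sub_sq_le_inner hconv hf hK x y (η / 2)
  rw [NNReal.coe_one, one_mul, dist_eq_norm, dist_eq_norm, sub_sub_sub_comm, ← smul_sub, ← hw]
  refine le_of_sq_le_sq ?_ (norm_nonneg _)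
  calc ‖x - y - η • w‖ ^ 2 = ‖x - y‖ ^ 2 - η * (2 * ⟪x - y, w⟫ - η * ‖w‖ ^ 2) := by
        rw [norm_sub_sq_real, real_inner_smul_right, norm_smul, mul_pow, Real.norm_eq_abs, sq_abs]
        ring
    _ ≤ ‖x - y‖ ^ 2 := sub_le_self _ (mul_nonneg hη (sub_nonneg.2 hcoercive))

theorem gradient_descent_velocity_of_escape_general (hconv : ConvexOn ℝ Set.univ f)
    (hf : Differentiable ℝ f) (hK : LipschitzWith K (gradient f)) {η : ℝ} (hη : 0 ≤ η)
    (hηK : η * K ≤ 2) {x : ℕ → E} (hrec : ∀ i, x (i + 1) = x i - η • gradient f (x i)) :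
    Tendsto (fun i : ℕ => ‖x i - x 0‖ / i) atTop (nhds (η * ⨅ y, ‖gradient f y‖)) := by
  set T : E → E := fun y => y - η • gradient f y
  have hiterate : ∀ i, T^[i] (x 0) = x i := fun i => by
    induction i with
    | zero => rfl
    | succ i ih => rw [Function.iterate_succ_apply', ih, hrec]
  have hdisplacement : ∀ y, ‖T y - y‖ = η * ‖gradient f y‖ := fun y => by
    rw [sub_sub_cancel_left, norm_neg, norm_smul, Real.norm_of_nonneg hη]
  have hT : LipschitzWith 1 T := lipschitzWith_one_sub_smul_gradient hconv hf hK hη hηK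
  simpa only [hiterate, hdisplacement, ← Real.mul_iInf_of_nonneg hη] using
    tendsto_norm_iterate_sub_self_div hT (x 0)

end Gradient

/-- Velocity of escape of gradient descent (Euclidean case of Proposition 3.9(3)):
if `κ* := inf_y ‖∇f(y)‖ > 0` and `(x_i)` is the gradient-descent sequence with step
size `1/L`, then `‖x_i - x₀‖ / i → κ*/L`. -/
theorem gradient_descent_velocity_of_escape {n : ℕ} (hn : 1 ≤ n)
    (f : EuclideanSpace ℝ (Fin n) → ℝ) (L : ℝ) (hL : 0 < L)
    (hconv : ConvexOn ℝ Set.univ f) (hdiff : Differentiable ℝ f)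
    (hsmooth : ∀ y z : EuclideanSpace ℝ (Fin n),
      ‖gradient f y - gradient f z‖ ≤ L * ‖y - z‖)
    (hκ : 0 < ⨅ y, ‖gradient f y‖)
    (x : ℕ → EuclideanSpace ℝ (Fin n))
    (hrec : ∀ i : ℕ, x (i + 1) = x i - (1 / L) • gradient f (x i)) :
    Tendsto (fun i : ℕ => ‖x i - x 0‖ / (i : ℝ)) atTop
      (nhds ((⨅ y, ‖gradient f y‖) / L)) := by
  have hK : LipschitzWith ⟨L, hL.le⟩ (gradient f) :=
    LipschitzWith.of_dist_le_mul fun y z => by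
      rw [dist_eq_norm, dist_eq_norm]
      exact hsmooth y z
  have hstep : 1 / L * L ≤ 2 := by rw [one_div_mul_cancel hL.ne']; norm_num
  simpa only [one_div_mul_eq_div] using gradient_descent_velocity_of_escape_general
    hconv hdiff hK (one_div_nonneg.2 hL.le) hstep hrec
end
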